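/- arXiv:2305.10575 — 3 statements merged into one kernel-verified Lean document; each statement's English description precedes it below -/
import Mathlib

section
/- There exist constants c > 0, n₀ and a₀ such that for all n ≥ n₀ and all integers a ≥ a₀ there exists a matrix A ∈ ℤ^{n×n} with all entries of absolute value at most 2^a, having at least two distinct complex eigenvalues, such that mindgap(A) ≤ 2^{−c a n²}; that is, the lower bound mindgap(A) ≥ 2^{−O(an²)} for integer matrices with entries of bit length a is sharp up to a constant factor in the exponent. -/
/-!
Fix `h = k + 1`, `T = 2 ^ (a - 1)` and `B = T ^ h`. For `s = ±1` the polynomial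
`x ^ (h + 1) - s * (B * x - 1)` has a root within `δ = B ^ (-(h + 1))` of `1 / B`: above `1 / B`
for `s = 1` and below it for `s = -1`, by the intermediate value theorem. The two roots are hence
distinct, and at distance at most `2 * δ = 2 ^ (1 - (a - 1) * h * (h + 1))`.

Although `B` has about `a * h` bits, both roots are eigenvalues of matrices with small entries:
take a weighted digraph with two cycles through a common vertex, one of length `h` and weight
`s * T ^ h`, the other of length `h + 1` and weight `-s`. The eigenvector is written down
explicitly in `mem_spectrum_cycleMatrix`. The direct sum of the two matrices for `s = 1` and
`s = -1`, of size `4 * h`, padded by zeros up to size `n` with `h = ⌊n / 4⌋`, is the required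
matrix.
-/

open Matrix

/-- The integer matrix whose row `i` is `c i • e (σ i) + d i • e (τ i)`, where `e` is the standard
basis. -/
def twoTermMatrix {ι : Type*} [DecidableEq ι] (σ τ : ι → ι) (c d : ι → ℤ) : Matrix ι ι ℤ :=
  Matrix.of fun i j => (if σ i = j then c i else 0) + (if τ i = j then d i else 0)

lemma twoTermMatrix_mulVec {ι : Type*} [DecidableEq ι] [Fintype ι] (σ τ : ι → ι) (c d : ι → ℤ)
    (v : ι → ℂ) (i : ι) :
    ((twoTermMatrix σ τ c d).map (Int.cast : ℤ → ℂ) *ᵥ v) i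
      = c i * v (σ i) + d i * v (τ i) := by
  simp [twoTermMatrix, mulVec, dotProduct, add_mul, Finset.sum_add_distrib]

lemma abs_twoTermMatrix_le {ι : Type*} [DecidableEq ι] (σ τ : ι → ι) (c d : ι → ℤ) (i j : ι) :
    |twoTermMatrix σ τ c d i j| ≤ |c i| + |d i| := by
  simp only [twoTermMatrix, Matrix.of_apply]
  refine (abs_add_le _ _).trans (add_le_add ?_ ?_) <;> split_ifs <;> simp

lemma mem_spectrum_of_mulVec {ι : Type*} [DecidableEq ι] [Fintype ι] (M : Matrix ι ι ℂ) (z : ℂ)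
    (v : ι → ℂ) (hv : v ≠ 0) (h : M *ᵥ v = z • v) : z ∈ spectrum ℂ M := by
  rw [← Matrix.spectrum_toLin', ← Module.End.hasEigenvalue_iff_mem_spectrum]
  exact Module.End.hasEigenvalue_of_hasEigenvector
    (x := v) ⟨Module.End.mem_eigenspace_iff.2 (by simpa using h), hv⟩

/-- The adjacency matrix of a digraph with two cycles through the vertex `inl (Fin.last k)`:
one consists of the `k + 1` vertices `inl i` and has weight `s * T ^ (k + 1)`, the other one
passes through the `k + 1` vertices `inr i` and has weight `-s`. -/
def cycleMatrix (k : ℕ) (s T : ℤ) :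
    Matrix (Fin (k + 1) ⊕ Fin (k + 1)) (Fin (k + 1) ⊕ Fin (k + 1)) ℤ :=
  twoTermMatrix
    (Sum.elim (fun i => Sum.inl (i + 1))
      (fun i => if i = Fin.last k then Sum.inl (Fin.last k) else Sum.inr (i + 1)))
    (fun _ => Sum.inr 0)
    (Sum.elim (fun i => if i = Fin.last k then s * T else T) (fun _ => 1))
    (Sum.elim (fun i => if i = Fin.last k then -s else 0) (fun _ => 0))

lemma abs_cycleMatrix_le (k : ℕ) (s T : ℤ) (hs : |s| = 1) (hT : 1 ≤ T)
    (i j : Fin (k + 1) ⊕ Fin (k + 1)) : |cycleMatrix k s T i j| ≤ 2 * T := by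
  refine (abs_twoTermMatrix_le _ _ _ _ i j).trans ?_
  have h0 : |T| = T := abs_of_nonneg (by omega)
  rcases i with i | i
  · by_cases hi : i = Fin.last k
    · simp [hi, abs_mul, hs, h0]; omega
    · simp [hi, h0]; omega
  · simp; omega

/-- The characteristic equation of `cycleMatrix k s T`: the eigenvector takes the value
`T ^ (k - i) * z ^ (i + 1)` at `inl i` and `z ^ i` at `inr i`. -/
lemma mem_spectrum_cycleMatrix (k : ℕ) (s T : ℤ) (z : ℂ)
    (hz : z ^ (k + 2) = s * ((T : ℂ) ^ (k + 1) * z - 1)) :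
    z ∈ spectrum ℂ ((cycleMatrix k s T).map (Int.cast : ℤ → ℂ)) := by
  let v : Fin (k + 1) ⊕ Fin (k + 1) → ℂ :=
    Sum.elim (fun i => (T : ℂ) ^ (k - (i : ℕ)) * z ^ ((i : ℕ) + 1)) (fun i => z ^ (i : ℕ))
  refine mem_spectrum_of_mulVec _ z v (fun h => ?_) (funext fun i => ?_)
  · simpa [v] using congrFun h (Sum.inr 0)
  · rw [cycleMatrix, twoTermMatrix_mulVec]
    rcases i with i | i <;> by_cases hi : i = Fin.last k
    · subst hi
      simp only [v, Sum.elim_inl, Sum.elim_inr, if_true, Fin.last_add_one, Pi.smul_apply,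
        smul_eq_mul, Fin.val_last, Fin.val_zero]
      push_cast
      simp only [Nat.sub_self, Nat.sub_zero, pow_zero]
      linear_combination -hz
    · have hlt : (i : ℕ) < k := by
        have := i.2
        have : (i : ℕ) ≠ k := fun h => hi (Fin.ext h)
        omega
      have hv : ((i + 1 : Fin (k + 1)) : ℕ) = i + 1 := by
        rw [Fin.val_add_one, if_neg hi]
      obtain ⟨m, hm⟩ : ∃ m, k = i + 1 + m := ⟨k - (i + 1), by omega⟩
      have e1 : k - (i : ℕ) = m + 1 := by omega
      have e2 : k - ((i : ℕ) + 1) = m := by omega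
      simp only [v, Sum.elim_inl, Sum.elim_inr, if_neg hi, Pi.smul_apply, smul_eq_mul, hv, e1, e2]
      push_cast
      ring
    · subst hi
      simp [v]
      ring
    · have hv : ((i + 1 : Fin (k + 1)) : ℕ) = i + 1 := by
        rw [Fin.val_add_one, if_neg hi]
      simp [v, hi, hv]
      ring

lemma mem_spectrum_fromBlocks {ι κ : Type*} [DecidableEq ι] [Fintype ι] [DecidableEq κ] [Fintype κ]
    (A : Matrix ι ι ℤ) (D : Matrix κ κ ℤ) (z : ℂ)
    (h : z ∈ spectrum ℂ (A.map (Int.cast : ℤ → ℂ)) ∨ z ∈ spectrum ℂ (D.map (Int.cast : ℤ → ℂ))) :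
    z ∈ spectrum ℂ ((fromBlocks A 0 0 D).map (Int.cast : ℤ → ℂ)) := by
  rw [fromBlocks_map]
  simp only [Matrix.mem_spectrum_iff_isRoot_charpoly] at h ⊢
  have h0 : (0 : Matrix ι κ ℤ).map (Int.cast : ℤ → ℂ) = 0 := by ext; simp
  rw [h0, charpoly_fromBlocks_zero₁₂, Polynomial.root_mul]
  exact h

lemma abs_fromBlocks_le {ι κ : Type*} (A : Matrix ι ι ℤ) (D : Matrix κ κ ℤ) (b : ℤ) (hb : 0 ≤ b)
    (hA : ∀ i j, |A i j| ≤ b) (hD : ∀ i j, |D i j| ≤ b) (i j : ι ⊕ κ) :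
    |fromBlocks A 0 0 D i j| ≤ b := by
  rcases i with i | i <;> rcases j with j | j <;> simp [hA, hD, hb]

lemma exists_fin_matrix {ι : Type*} [DecidableEq ι] [Fintype ι] (n : ℕ) (hn : Fintype.card ι ≤ n)
    (A : Matrix ι ι ℤ) (b : ℤ) (hb : 0 ≤ b) (hA : ∀ i j, |A i j| ≤ b) :
    ∃ A' : Matrix (Fin n) (Fin n) ℤ, (∀ i j, |A' i j| ≤ b) ∧
      spectrum ℂ (A.map (Int.cast : ℤ → ℂ)) ⊆ spectrum ℂ (A'.map (Int.cast : ℤ → ℂ)) := by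
  obtain ⟨r, rfl⟩ := Nat.exists_eq_add_of_le hn
  have e : ι ⊕ Fin r ≃ Fin (Fintype.card ι + r) := Fintype.equivFinOfCardEq (by simp)
  refine ⟨reindex e e (fromBlocks A 0 0 0), fun i j => ?_, fun z hz => ?_⟩
  · exact abs_fromBlocks_le A 0 b hb hA (by simp [hb]) _ _
  · have := mem_spectrum_fromBlocks A (0 : Matrix (Fin r) (Fin r) ℤ) z (Or.inl hz)
    rw [Matrix.mem_spectrum_iff_isRoot_charpoly] at this ⊢
    rw [← charpoly_reindex e] at this
    exact this

/-- The roots of `x ^ (k + 2) = ± (B * x - 1)` near `1 / B`. -/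
lemma exists_roots (k : ℕ) (B : ℝ) (hB : 2 ^ (k + 2) ≤ B) :
    ∃ x y : ℝ, x ^ (k + 2) = B * x - 1 ∧ y ^ (k + 2) = -(B * y - 1) ∧ y < x ∧
      x - y ≤ 2 * (B ^ (k + 2))⁻¹ := by
  have hB1 : (1 : ℝ) < B := lt_of_lt_of_le (one_lt_pow₀ (by norm_num) (by omega)) hB
  have hB0 : 0 < B := by linarith
  set β : ℝ := B⁻¹ with hβ
  have hβ0 : 0 < β := inv_pos.2 hB0
  have hBβ : B * β = 1 := mul_inv_cancel₀ hB0.ne'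
  have hβ1 : β < 1 := inv_lt_one_of_one_lt₀ hB1
  set δ : ℝ := β ^ (k + 2) with hδ
  have hδe : (B ^ (k + 2))⁻¹ = δ := by rw [hδ, hβ, inv_pow]
  have hδ0 : 0 < δ := pow_pos hβ0 _
  have hδβ : δ < β := pow_lt_self_of_lt_one₀ hβ0 hβ1 (by omega)
  obtain ⟨x, ⟨hx1, hx2⟩, hx⟩ :
      (0 : ℝ) ∈ (fun x : ℝ => B * x - 1 - x ^ (k + 2)) '' Set.Ioo β (β + δ) := by
    refine intermediate_value_Ioo (by linarith) (by fun_prop) ⟨by simp [hBβ]; linarith, ?_⟩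
    have h1 : (β + δ) ^ (k + 2) < (2 * β) ^ (k + 2) :=
      pow_lt_pow_left₀ (by linarith) (by linarith) (by omega)
    rw [mul_pow, ← hδ] at h1
    have h2 := mul_le_mul_of_nonneg_right hB hδ0.le
    have h3 : B * (β + δ) = 1 + B * δ := by rw [mul_add, hBβ]
    simp only [h3]
    linarith
  obtain ⟨y, ⟨hy1, hy2⟩, hy⟩ :
      (0 : ℝ) ∈ (fun x : ℝ => B * x - 1 + x ^ (k + 2)) '' Set.Ioo (β - δ) β := by
    refine intermediate_value_Ioo (by linarith) (by fun_prop) ⟨?_, by simp [hBβ]; linarith⟩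
    have h1 : (β - δ) ^ (k + 2) < β ^ (k + 2) :=
      pow_lt_pow_left₀ (by linarith) (by linarith) (by omega)
    rw [← hδ] at h1
    have h2 := mul_le_mul_of_nonneg_right hB1.le hδ0.le
    have h3 : B * (β - δ) = 1 - B * δ := by rw [mul_sub, hBβ]
    simp only [h3]
    linarith
  exact ⟨x, y, by simp at hx; linarith, by simp at hy; linarith, by linarith, by
    rw [hδe]; linarith⟩

theorem mindgap_lower_bound_is_sharp :
    ∃ (c : ℝ) (n₀ a₀ : ℕ), 0 < c ∧
      ∀ (n a : ℕ), n₀ ≤ n → a₀ ≤ a →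
        ∃ A : Matrix (Fin n) (Fin n) ℤ,
          (∀ i j, |A i j| ≤ 2 ^ a) ∧
          ∃ lam mu : ℂ, lam ∈ spectrum ℂ (A.map (Int.cast : ℤ → ℂ)) ∧
            mu ∈ spectrum ℂ (A.map (Int.cast : ℤ → ℂ)) ∧ lam ≠ mu ∧
            ‖lam - mu‖ ≤ (2 : ℝ) ^ (-(c * a * n ^ 2)) := by
  refine ⟨1 / 128, 4, 3, by norm_num, fun n a hn ha => ?_⟩
  obtain ⟨b, rfl⟩ : ∃ b, a = b + 1 := ⟨a - 1, by omega⟩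
  obtain ⟨k, hk⟩ : ∃ k, n / 4 = k + 1 := ⟨n / 4 - 1, by omega⟩
  have hT : (1 : ℤ) ≤ 2 ^ b := one_le_pow₀ (by norm_num)
  have hT2 : (2 : ℤ) * 2 ^ b = 2 ^ (b + 1) := by ring
  have hb0 : (0 : ℤ) ≤ 2 ^ (b + 1) := by positivity
  obtain ⟨A, hA, hspec⟩ := exists_fin_matrix n (by simp; omega)
    (fromBlocks (cycleMatrix k 1 (2 ^ b)) 0 0 (cycleMatrix k (-1) (2 ^ b))) (2 ^ (b + 1)) hb0
    (abs_fromBlocks_le _ _ _ hb0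
      (fun i j => hT2 ▸ abs_cycleMatrix_le k 1 _ (by simp) hT i j)
      (fun i j => hT2 ▸ abs_cycleMatrix_le k (-1) _ (by simp) hT i j))
  obtain ⟨x, y, hx, hy, hyx, hgap⟩ := exists_roots k (((2 : ℝ) ^ b) ^ (k + 1)) (by
    rw [← pow_mul]
    refine pow_le_pow_right₀ (by norm_num) ?_
    nlinarith [Nat.mul_le_mul_right (k + 1) (show 2 ≤ b by omega)])
  refine ⟨A, hA, x, y, hspec (mem_spectrum_fromBlocks _ _ _ (Or.inl ?_)),
    hspec (mem_spectrum_fromBlocks _ _ _ (Or.inr ?_)), ?_, ?_⟩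
  · exact mem_spectrum_cycleMatrix _ _ _ _ (by
      have := congrArg (Complex.ofReal) hx
      push_cast at this ⊢
      rw [this]; ring)
  · exact mem_spectrum_cycleMatrix _ _ _ _ (by
      have := congrArg (Complex.ofReal) hy
      push_cast at this ⊢
      rw [this]; ring)
  · exact_mod_cast hyx.ne'
  · rw [← Complex.ofReal_sub, Complex.norm_real, Real.norm_of_nonneg (by linarith)]
    refine hgap.trans ?_
    have e : 2 * ((((2 : ℝ) ^ b) ^ (k + 1)) ^ (k + 2))⁻¹
        = (2 : ℝ) ^ (1 - (b : ℝ) * (k + 1) * (k + 2)) := by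
      rw [Real.rpow_sub (by norm_num), Real.rpow_one, div_eq_mul_inv, ← pow_mul, ← pow_mul,
        ← Real.rpow_natCast]
      push_cast
      rw [mul_assoc (b : ℝ)]
    rw [e]
    refine Real.rpow_le_rpow_of_exponent_le (by norm_num) ?_
    have hb : (2 : ℝ) ≤ b := by exact_mod_cast (show 2 ≤ b by omega)
    have hk0 : (0 : ℝ) ≤ k := Nat.cast_nonneg k
    -- `n ≤ 8 * h`, `a ≤ 2 * (a - 1)` and `1 ≤ (a - 1) * h` give the constant `1 / (2 * 8 ^ 2)`.
    have hnk : (n : ℝ) ≤ 8 * (k + 1) := by exact_mod_cast (show n ≤ 8 * (k + 1) by omega)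
    have hn2 : (n : ℝ) ^ 2 ≤ (8 * (k + 1)) ^ 2 := pow_le_pow_left₀ (Nat.cast_nonneg n) hnk 2
    have h1 : ((b : ℝ) + 1) * n ^ 2 ≤ (2 * b) * (8 * (k + 1)) ^ 2 :=
      mul_le_mul (by linarith) hn2 (by positivity) (by linarith)
    have h2 : (1 : ℝ) ≤ b * (k + 1) := by nlinarith
    push_cast
    nlinarith
end

section
/- (Mahler's root separation bound.) Let p ∈ ℤ[x] be a polynomial of degree n ≥ 2 with no repeated complex roots, and suppose all coefficients of p have absolute value at most h, where h ≥ 1. Then any two distinct complex roots α ≠ β of p satisfy |α − β| > √3 · n^{−(n+2)/2} · (√(n+1) · h)^{−(n−1)}. -/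
/-!
Let `z₁, …, zₙ` be the complex roots of `p`, `a` its leading coefficient, and `V` the Vandermonde
matrix of the roots, with rows `(1, zᵢ, …, zᵢⁿ⁻¹)`.

* Lower bound: `|a|²ⁿ⁻² |det V|²` is the absolute value of the discriminant of `p`, a nonzero
  integer, so `1 ≤ |a|ⁿ⁻¹ |det V|` (`one_le_leadingCoeff_pow_mul_det`).
* Upper bound: if `|β| ≤ |α|`, subtracting the row of `β` from the row of `α` leaves `det V`
  unchanged and makes the row of `α` equal to `(α - β)` times divided differences of the
  monomials, whose `k`-th entry is at most `k · max(1, |α|)ⁿ⁻¹`. Since `∑ k² < n³ / 3`,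
  Hadamard's inequality (`norm_det_le_prod_of_row`) gives
  `|det V| < |α - β| · √(n³ / 3) · √n ⁿ⁻¹ · (∏ max(1, |zᵢ|))ⁿ⁻¹` (`norm_det_vandermonde_le`).

As `|a| ∏ max(1, |zᵢ|)` is the Mahler measure of `p`, which is at most `√(n + 1) · h`, combining
the two bounds gives the claim.
-/

open Polynomial Finset

/-- **Hadamard's inequality** for complex matrices: `|det A|` is at most the product of (upper
bounds for) the Euclidean norms of the rows. In the Gram-Schmidt orthonormal basis of the rows the
matrix is triangular, with diagonal entries bounded by the norms of the rows. -/
theorem norm_det_le_prod_of_row {n : ℕ} (A : Matrix (Fin n) (Fin n) ℂ) (r : Fin n → ℝ)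
    (hr : ∀ i, ∑ j, ‖A i j‖ ^ 2 ≤ r i ^ 2) (hr0 : ∀ i, 0 ≤ r i) : ‖A.det‖ ≤ ∏ i, r i := by
  let E := EuclideanSpace ℂ (Fin n)
  let v : Fin n → E := fun i => WithLp.toLp 2 (A i)
  let e : OrthonormalBasis (Fin n) ℂ E := EuclideanSpace.basisFun (Fin n) ℂ
  have hd : Module.finrank ℂ E = Fintype.card (Fin n) := by simp [E]
  let b := InnerProductSpace.gramSchmidtOrthonormalBasis hd v
  have h1 : e.toBasis.det v = A.det := by
    rw [Module.Basis.det_apply, ← Matrix.det_transpose A]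
    congr 1
  have h2 : e.toBasis.det v = e.toBasis.det b * b.toBasis.det v := by
    simp only [Module.Basis.det_apply]
    rw [← Matrix.det_mul, ← b.coe_toBasis, Module.Basis.toMatrix_mul_toMatrix]
  rw [← h1, h2, norm_mul, OrthonormalBasis.det_to_matrix_orthonormalBasis, one_mul,
    InnerProductSpace.gramSchmidtOrthonormalBasis_det, norm_prod]
  refine Finset.prod_le_prod (fun _ _ => norm_nonneg _) fun i _ => ?_
  calc _ ≤ ‖b i‖ * ‖v i‖ := norm_inner_le_norm _ _
    _ = ‖v i‖ := by simp
    _ ≤ r i := by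
      rw [EuclideanSpace.norm_eq]
      exact Real.sqrt_le_iff.2 ⟨hr0 i, hr i⟩

theorem sum_sq_lt (n : ℕ) (hn : 0 < n) : ∑ k : Fin n, (k : ℝ) ^ 2 < (n : ℝ) ^ 3 / 3 := by
  have (m : ℕ) : ∑ k ∈ range m, (k : ℝ) ^ 2 = (m : ℝ) ^ 3 / 3 - m ^ 2 / 2 + m / 6 := by
    induction m with
    | zero => simp
    | succ m ih => rw [sum_range_succ, ih]; push_cast; ring
  rw [Fin.sum_univ_eq_sum_range (fun k => (k : ℝ) ^ 2), this]
  have : (1 : ℝ) ≤ n := by exact_mod_cast hn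
  nlinarith

theorem norm_pow_sub_pow_le (x y : ℂ) (hxy : ‖y‖ ≤ ‖x‖) {n k : ℕ} (hk : k < n) :
    ‖x ^ k - y ^ k‖ ≤ k * (‖x - y‖ * max 1 ‖x‖ ^ (n - 1)) := by
  have hM : 1 ≤ max 1 ‖x‖ := le_max_left _ _
  rw [← (Commute.all x y).mul_geom_sum₂, norm_mul]
  have : ‖∑ i ∈ range k, x ^ i * y ^ (k - 1 - i)‖ ≤ k * max 1 ‖x‖ ^ (n - 1) := by
    refine (norm_sum_le _ _).trans ?_
    rw [← nsmul_eq_mul]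
    refine (sum_le_card_nsmul _ _ (max 1 ‖x‖ ^ (n - 1)) fun i hi => ?_).trans (by simp)
    rw [norm_mul, norm_pow, norm_pow]
    calc _ ≤ max 1 ‖x‖ ^ i * max 1 ‖x‖ ^ (k - 1 - i) := by
          gcongr
          · exact le_max_right _ _
          · exact hxy.trans (le_max_right _ _)
      _ = max 1 ‖x‖ ^ (i + (k - 1 - i)) := (pow_add _ _ _).symm
      _ ≤ _ := pow_le_pow_right₀ hM (by have := mem_range.1 hi; omega)
  calc _ ≤ ‖x - y‖ * (k * max 1 ‖x‖ ^ (n - 1)) := by gcongr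
    _ = _ := by ring

/-- Mahler's upper bound for the Vandermonde determinant: Hadamard's inequality applied after
subtracting row `b` from row `a`, which brings out the factor `z a - z b`. -/
theorem norm_det_vandermonde_le {n : ℕ} (z : Fin n → ℂ) {a b : Fin n} (hab : a ≠ b)
    (h : ‖z b‖ ≤ ‖z a‖) (hz : z a ≠ z b) :
    ‖(Matrix.vandermonde z).det‖ <
      ‖z a - z b‖ * √((n : ℝ) ^ 3 / 3) * √n ^ (n - 1) * (∏ i, max 1 ‖z i‖) ^ (n - 1) := by
  have hn : 0 < n := a.pos
  have hd : 0 < ‖z a - z b‖ := norm_pos_iff.2 (sub_ne_zero.2 hz)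
  set V := Matrix.vandermonde z
  have hV : (V.updateRow a (V a + (-1 : ℂ) • V b)).det = V.det :=
    Matrix.det_updateRow_add_smul_self V hab (-1)
  set s : ℝ := √(∑ k : Fin n, (k : ℝ) ^ 2)
  have hs : s < √((n : ℝ) ^ 3 / 3) :=
    Real.sqrt_lt_sqrt (by positivity) (sum_sq_lt n hn)
  -- After the row operation, row `i` has norm at most `c i * max 1 ‖z i‖ ^ (n - 1)`.
  let c : Fin n → ℝ := fun i => if i = a then ‖z a - z b‖ * s else √n
  have hM : ∀ i, 0 < max 1 ‖z i‖ := fun i => lt_max_of_lt_left one_pos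
  have hdet : ‖V.det‖ ≤ ∏ i, c i * max 1 ‖z i‖ ^ (n - 1) := by
    rw [← hV]
    refine norm_det_le_prod_of_row _ _ (fun i => ?_) fun i => ?_
    · by_cases hi : i = a
      · subst hi
        simp only [Matrix.updateRow_self, c, if_true]
        calc _ ≤ ∑ k : Fin n, (k * (‖z i - z b‖ * max 1 ‖z i‖ ^ (n - 1))) ^ 2 := by
              gcongr with k
              simpa [V, Matrix.vandermonde_apply, ← sub_eq_add_neg] using
                norm_pow_sub_pow_le (z i) (z b) h k.2
          _ = (‖z i - z b‖ * s * max 1 ‖z i‖ ^ (n - 1)) ^ 2 := by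
              simp only [mul_pow, ← sum_mul, s]
              rw [Real.sq_sqrt (by positivity)]
              ring
      · simp only [Matrix.updateRow_ne hi, c, if_neg hi]
        calc _ ≤ ∑ k : Fin n, (max 1 ‖z i‖ ^ (n - 1)) ^ 2 := by
              gcongr with k
              rw [show V i k = z i ^ (k : ℕ) from Matrix.vandermonde_apply z i k, norm_pow]
              calc _ ≤ max 1 ‖z i‖ ^ (k : ℕ) := by gcongr; exact le_max_right _ _
                _ ≤ _ := pow_le_pow_right₀ (le_max_left _ _) (by omega)
          _ = _ := by
              rw [mul_pow, Real.sq_sqrt (by positivity)]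
              simp
    · have : 0 ≤ c i := by simp only [c]; split_ifs <;> positivity
      have := hM i
      positivity
  have hc : ∏ i, c i = ‖z a - z b‖ * s * √n ^ (n - 1) := by
    rw [← mul_prod_erase univ c (mem_univ a)]
    congr 1
    · simp [c]
    · rw [prod_congr rfl (g := fun _ => √n) fun i hi => if_neg (ne_of_mem_erase hi)]
      simp
  rw [prod_mul_distrib, hc, prod_pow] at hdet
  refine hdet.trans_lt ?_
  have : 0 < ∏ i, max 1 ‖z i‖ := prod_pos fun i _ => hM i
  have : (0 : ℝ) < n := by exact_mod_cast hn
  gcongr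

theorem eval_derivative_of_prod {n : ℕ} (P : ℂ[X]) (c : ℂ) (z : Fin n → ℂ)
    (hP : P = C c * ∏ j, (X - C (z j))) (i : Fin n) :
    P.derivative.eval (z i) = c * ∏ j ∈ {i}ᶜ, (z i - z j) := by
  rw [hP, Fintype.prod_eq_mul_prod_compl i]
  simp [derivative_mul, eval_prod]

theorem norm_det_vandermonde_sq {n : ℕ} (z : Fin n → ℂ) :
    ∏ i, ∏ j ∈ {i}ᶜ, ‖z i - z j‖ = ‖(Matrix.vandermonde z).det‖ ^ 2 := by
  simp only [Matrix.det_vandermonde, norm_prod, ← prod_pow]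
  rw [← prod_prod_Ioi_mul_eq_prod_prod_off_diag (fun j i => ‖z i - z j‖)]
  refine prod_congr rfl fun i _ => prod_congr rfl fun j _ => ?_
  rw [norm_sub_rev (z i), sq]

/-- The square of the right-hand side is the absolute value of the discriminant of `p`, an integer
which is nonzero because the roots are distinct. -/
theorem one_le_leadingCoeff_pow_mul_det (p : ℤ[X]) (n : ℕ) (hn : 2 ≤ n) (hdeg : p.natDegree = n)
    (z : Fin n → ℂ) (hz : Function.Injective z)
    (hroots : (p.map (Int.castRingHom ℂ)).roots = univ.val.map z) :
    1 ≤ ‖(p.leadingCoeff : ℂ)‖ ^ (n - 1) * ‖(Matrix.vandermonde z).det‖ := by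
  have hp0 : p ≠ 0 := by rintro rfl; simp at hdeg; omega
  have hinj : Function.Injective (Int.castRingHom ℂ) := Int.cast_injective
  set P := p.map (Int.castRingHom ℂ) with hPdef
  have hPd : P.natDegree = n := by rw [hPdef, natDegree_map_eq_of_injective hinj, hdeg]
  have hPl : P.leadingCoeff = (p.leadingCoeff : ℂ) := by
    rw [hPdef, leadingCoeff_map_of_injective hinj]; rfl
  have hs : P.Splits := IsAlgClosed.splits P
  have hP : P = C (p.leadingCoeff : ℂ) * ∏ j, (X - C (z j)) := by
    conv_lhs => rw [hs.eq_prod_roots, hPl, hroots]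
    rw [Multiset.map_map]
    rfl
  have hlc : 0 < ‖(p.leadingCoeff : ℂ)‖ := by simpa using hp0
  -- Compute the resultant of `p` and its derivative both as a multiple of the discriminant over `ℤ`
  -- and as a product over the roots over `ℂ`.
  have h1 := resultant_eq_prod_eval P P.derivative (n - 1)
    (hPd ▸ natDegree_derivative_le P) hs
  have h2 := resultant_deriv (f := p) (natDegree_pos_iff_degree_pos.1 (by omega))
  rw [hPd, hPl, hroots, Multiset.map_map, hPdef, derivative_map, resultant_map_map] at h1
  rw [hdeg] at h2
  rw [h2, ← derivative_map, ← hPdef] at h1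
  replace h1 : ((((-1) ^ (n * (n - 1) / 2) * p.leadingCoeff * p.discr : ℤ)) : ℂ)
    = (p.leadingCoeff : ℂ) ^ (n - 1) * ∏ i, P.derivative.eval (z i) := h1
  simp only [eval_derivative_of_prod P _ z hP, prod_mul_distrib, prod_const, card_univ,
    Fintype.card_fin] at h1
  have h3 := congrArg norm h1
  push_cast at h3
  simp only [norm_mul, norm_pow, norm_neg, norm_one, one_pow, one_mul, norm_prod,
    norm_det_vandermonde_sq] at h3
  have h4 : ‖(p.discr : ℂ)‖ =
      (‖(p.leadingCoeff : ℂ)‖ ^ (n - 1) * ‖(Matrix.vandermonde z).det‖) ^ 2 := by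
    apply mul_left_cancel₀ hlc.ne'
    rw [h3]
    obtain ⟨m, rfl⟩ : ∃ m, n = m + 1 := ⟨n - 1, by omega⟩
    simp only [Nat.add_sub_cancel]
    ring
  have hV : 0 < ‖(Matrix.vandermonde z).det‖ :=
    norm_pos_iff.2 (Matrix.det_vandermonde_ne_zero_iff.2 hz)
  have h5 : 0 < ‖(p.discr : ℂ)‖ := by rw [h4]; positivity
  have h6 : 1 ≤ ‖(p.discr : ℂ)‖ := by
    rw [Complex.norm_intCast] at h5 ⊢
    have := abs_pos.1 h5
    exact_mod_cast Int.one_le_abs (by exact_mod_cast this)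
  rw [h4] at h6
  exact (one_le_sq_iff₀ (by positivity)).1 h6

theorem mahler_root_separation (p : Polynomial ℤ) (n : ℕ) (hn : 2 ≤ n)
    (hdeg : p.natDegree = n)
    (hsqfree : (p.map (Int.castRingHom ℂ)).roots.Nodup)
    (h : ℝ) (hh : 1 ≤ h) (hcoeff : ∀ i, (|p.coeff i| : ℝ) ≤ h)
    (α β : ℂ) (hα : Polynomial.aeval α p = 0) (hβ : Polynomial.aeval β p = 0)
    (hαβ : α ≠ β) :
    Real.sqrt 3 * (n : ℝ) ^ (-((n : ℝ) + 2) / 2) *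
      (Real.sqrt ((n : ℝ) + 1) * h) ^ (-((n : ℝ) - 1)) < ‖α - β‖ := by
  wlog hle : ‖β‖ ≤ ‖α‖ generalizing α β
  · rw [norm_sub_rev]
    exact this β α hβ hα hαβ.symm (le_of_not_ge hle)
  have hp0 : p ≠ 0 := by rintro rfl; simp at hdeg; omega
  have hinj : Function.Injective (Int.castRingHom ℂ) := Int.cast_injective
  set P := p.map (Int.castRingHom ℂ) with hPdef
  have hP0 : P ≠ 0 := (Polynomial.map_ne_zero_iff hinj).2 hp0
  have hPd : P.natDegree = n := by rw [hPdef, natDegree_map_eq_of_injective hinj, hdeg]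
  have hPl : P.leadingCoeff = (p.leadingCoeff : ℂ) := by
    rw [hPdef, leadingCoeff_map_of_injective hinj]; rfl
  have hcard : P.roots.toFinset.card = n := by
    rw [Multiset.toFinset_card_of_nodup hsqfree,
      ← (IsAlgClosed.splits P).natDegree_eq_card_roots, hPd]
  let e := P.roots.toFinset.equivFinOfCardEq hcard
  let z : Fin n → ℂ := fun i => (e.symm i : ℂ)
  have hz : Function.Injective z := Subtype.val_injective.comp e.symm.injective
  have himg : univ.image z = P.roots.toFinset := by
    ext x
    simp only [mem_image, mem_univ, true_and, z]
    exact ⟨fun ⟨i, hi⟩ => hi ▸ (e.symm i).2, fun hx => ⟨e ⟨x, hx⟩, by simp⟩⟩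
  have hroots : P.roots = univ.val.map z := by
    rw [← image_val_of_injOn hz.injOn, himg, Multiset.toFinset_val, hsqfree.dedup]
  have hmem : ∀ x : ℂ, aeval x p = 0 → ∃ i, z i = x := fun x hx => by
    have : x ∈ univ.image z := by
      rw [himg, Multiset.mem_toFinset, mem_roots hP0, IsRoot.def, hPdef, eval_map]
      exact hx
    simpa using this
  obtain ⟨a, rfl⟩ := hmem α hα
  obtain ⟨b, rfl⟩ := hmem β hβ
  have hab : a ≠ b := fun hc => hαβ (hc ▸ rfl)
  have hdet := norm_det_vandermonde_le z hab hle hαβ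
  have hone := one_le_leadingCoeff_pow_mul_det p n hn hdeg z hz hroots
  have hM : ‖(p.leadingCoeff : ℂ)‖ * ∏ i, max 1 ‖z i‖ ≤ √((n : ℝ) + 1) * h := by
    calc _ = P.mahlerMeasure := by
          rw [mahlerMeasure_eq_leadingCoeff_mul_prod_roots, hPl, hroots, Multiset.map_map]
          rfl
      _ ≤ √(P.natDegree + 1) * P.supNorm := mahlerMeasure_le_sqrt_natDegree_add_one_mul_supNorm P
      _ ≤ _ := by
          rw [hPd]
          gcongr
          obtain ⟨i, hi⟩ := P.exists_eq_supNorm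
          rw [hi, hPdef, coeff_map]
          simpa [Complex.norm_intCast] using hcoeff i
  have hn0 : (0 : ℝ) < n := by exact_mod_cast (by omega : 0 < n)
  have hlc : 0 < ‖(p.leadingCoeff : ℂ)‖ := by simpa using hp0
  have hd : 0 < ‖z a - z b‖ := norm_pos_iff.2 (sub_ne_zero.2 hαβ)
  have hprod : 0 < ∏ i, max 1 ‖z i‖ := prod_pos fun i _ => lt_max_of_lt_left one_pos
  set B := √((n : ℝ) + 1) * h
  have hB : 0 < B := by positivity
  have hkey : 1 < ‖z a - z b‖ * (√((n : ℝ) ^ 3 / 3) * √n ^ (n - 1)) * B ^ (n - 1) := by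
    calc 1 ≤ _ := hone
      _ < ‖(p.leadingCoeff : ℂ)‖ ^ (n - 1) * (‖z a - z b‖ * √((n : ℝ) ^ 3 / 3) * √n ^ (n - 1) *
            (∏ i, max 1 ‖z i‖) ^ (n - 1)) := by gcongr
      _ = ‖z a - z b‖ * (√((n : ℝ) ^ 3 / 3) * √n ^ (n - 1)) *
            (‖(p.leadingCoeff : ℂ)‖ * ∏ i, max 1 ‖z i‖) ^ (n - 1) := by rw [mul_pow]; ring
      _ ≤ _ := by gcongr
  have hpow : √((n : ℝ) ^ 3 / 3) * √n ^ (n - 1) = (n : ℝ) ^ (((n : ℝ) + 2) / 2) / √3 := by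
    rw [Real.sqrt_div (by positivity), div_mul_eq_mul_div]
    congr 1
    rw [Real.sqrt_eq_rpow, Real.sqrt_eq_rpow, ← Real.rpow_natCast, ← Real.rpow_natCast,
      ← Real.rpow_mul hn0.le, ← Real.rpow_mul hn0.le, ← Real.rpow_add hn0]
    congr 1
    push_cast [Nat.cast_sub (by omega : 1 ≤ n)]
    ring
  have hBpow : B ^ (n - 1) = B ^ ((n : ℝ) - 1) := by
    rw [← Real.rpow_natCast, Nat.cast_sub (by omega), Nat.cast_one]
  rw [hpow, hBpow] at hkey
  rw [neg_div, Real.rpow_neg hn0.le, Real.rpow_neg hB.le]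
  have h1 : 0 < (n : ℝ) ^ (((n : ℝ) + 2) / 2) := Real.rpow_pos_of_pos hn0 _
  have h2 : 0 < B ^ ((n : ℝ) - 1) := Real.rpow_pos_of_pos hB _
  rw [← div_eq_mul_inv, ← div_eq_mul_inv, div_div, div_lt_iff₀ (by positivity)]
  have h3 : 0 < √(3 : ℝ) := by positivity
  calc √3 = √3 * 1 := (mul_one _).symm
    _ < √3 * (‖z a - z b‖ * ((n : ℝ) ^ (((n : ℝ) + 2) / 2) / √3) * B ^ ((n : ℝ) - 1)) := by
        gcongr
    _ = _ := by field_simp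
end

section
/- Let T_n be the (2n+1)×(2n+1) symmetric tridiagonal matrix with diagonal entries T_n(k,k) = |n + 1 − k| for k = 1, …, 2n+1, all 1's on the superdiagonal and subdiagonal, and zeros elsewhere. Then there exist constants C ≥ 1 and c > 0 such that for all n ≥ 1, the minimum gap between distinct eigenvalues of T_n satisfies mindgap(T_n) ≤ C · 2^{−c n}; that is, the eigenvalue gaps of T_n are exponentially small in n. -/
/-!
`T_n` commutes with the reflection about its centre, so eigenvectors may be taken odd or even.
Reading an eigenvector outwards from the centre gives a solution of the three-term recurrence
`s (j+2) = (x - (j+1)) * s (j+1) - s j`; write `q` for the solution with `q 0 = 0`, `q 1 = 1` (odd)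
and `r` for the one with `r 0 = 1`, `r 1 = x / 2` (even). Then `x` is an eigenvalue as soon as
`q (n+1)` or `r (n+1)` vanishes at `x` (`mem_spectrum_of_recSol`).

The intermediate value theorem on `[n, n+2]` gives a zero `lam ≥ n` of `q (n+1)`. The Casoratian of
`q` at `lam` and `r` at `mu` (`casoratian`) reads
`q n * r (n+1) = -1 + (mu - lam) * ∑ j ∈ [1, n], q j * r j`.
At `mu = lam` it shows `q n ≠ 0` and `r (n+1) < 0`. Since `lam ≥ n`, the products `q j * r j` are
nonnegative and one of them is at least `2 ^ n / 8` (`recSol_growth`), because the diagonal entries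
close to the centre are far below `lam`, which forces geometric growth. So at
`mu = lam + 8 / 2 ^ n` the right side is nonnegative, and `r (n+1)` changes sign in between:
this gives an even eigenvalue different from `lam` at distance at most `8 / 2 ^ n`.
-/

/-- The solution, with initial values `a, b`, of the eigenvector recurrence of `T_n` at `x`;
the index is the distance from the centre of the matrix. -/
noncomputable def recSol (a b x : ℝ) : ℕ → ℝ
  | 0 => a
  | 1 => b
  | (j + 2) => (x - (j + 1)) * recSol a b x (j + 1) - recSol a b x j

lemma recSol_add_two (a b x : ℝ) (j : ℕ) :
    recSol a b x (j + 2) = (x - (j + 1)) * recSol a b x (j + 1) - recSol a b x j := by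
  rw [recSol]

lemma continuous_recSol (a : ℝ) {b : ℝ → ℝ} (hb : Continuous b) (j : ℕ) :
    Continuous fun x => recSol a (b x) x j := by
  induction j using Nat.twoStepInduction with
  | zero => simpa only [recSol] using continuous_const
  | one => simpa only [recSol] using hb
  | more j h0 h1 =>
    simp only [recSol_add_two]
    fun_prop

lemma recSol_mono {a b x : ℝ} {n : ℕ} (hx : (n : ℝ) ≤ x) (ha : 0 ≤ a) (hab : a ≤ b) (j : ℕ)
    (hj : j + 2 ≤ n) : 0 ≤ recSol a b x j ∧ recSol a b x j ≤ recSol a b x (j + 1) := by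
  induction j with
  | zero => exact ⟨by simpa only [recSol] using ha, by simpa only [recSol] using hab⟩
  | succ j ih =>
    obtain ⟨h0, h1⟩ := ih (by omega)
    have h2 : (j : ℝ) + 3 ≤ n := by exact_mod_cast hj
    refine ⟨h0.trans h1, ?_⟩
    rw [recSol_add_two]
    nlinarith [mul_nonneg (show 0 ≤ x - (j + 1) - 2 by linarith) (h0.trans h1)]

/-- Monotonicity fails in the last step, where the coefficient is only at least `1`, but
nonnegativity persists up to index `n`. -/
lemma recSol_nonneg {a b x : ℝ} {n : ℕ} (hn : 2 ≤ n) (hx : (n : ℝ) ≤ x) (ha : 0 ≤ a) (hab : a ≤ b)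
    (j : ℕ) (hj : j ≤ n) : 0 ≤ recSol a b x j := by
  obtain ⟨m, rfl⟩ := Nat.exists_eq_add_of_le' hn
  obtain ⟨h0, h1⟩ := recSol_mono hx ha hab m le_rfl
  rcases Nat.lt_or_ge m j with h | h
  · obtain rfl | rfl : j = m + 1 ∨ j = m + 2 := by omega
    · exact h0.trans h1
    · rw [recSol_add_two]
      push_cast at hx
      nlinarith [mul_nonneg (show 0 ≤ x - (m + 1) - 1 by linarith) (h0.trans h1)]
  · exact (recSol_mono hx ha hab j (by omega)).1

/-- As long as the coefficient `x - (j + 1)` is at least `3`, each step at least doubles. -/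
lemma recSol_growth {a b x : ℝ} {n : ℕ} (hx : (n : ℝ) ≤ x) (ha : 0 ≤ a) (hab : a ≤ b) (j : ℕ)
    (hj : j + 3 ≤ n) : 2 ^ j * b ≤ recSol a b x (j + 1) := by
  induction j with
  | zero => simp [recSol]
  | succ j ih =>
    have h1 := ih (by omega)
    obtain ⟨h2, h3⟩ := recSol_mono hx ha hab j (by omega)
    have h4 : (j : ℝ) + 4 ≤ n := by exact_mod_cast hj
    rw [recSol_add_two, pow_succ]
    nlinarith [mul_nonneg (show 0 ≤ x - (j + 1) - 3 by linarith) (h2.trans h3)]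

lemma casoratian (a b c d x y : ℝ) (n : ℕ) :
    recSol a b x n * recSol c d y (n + 1) - recSol a b x (n + 1) * recSol c d y n
      = a * d - b * c
        + (y - x) * ∑ j ∈ Finset.range n, recSol a b x (j + 1) * recSol c d y (j + 1) := by
  induction n with
  | zero => simp [recSol]
  | succ n ih =>
    rw [Finset.sum_range_succ, recSol_add_two, recSol_add_two]
    linear_combination ih

lemma exists_odd_root (n : ℕ) (hn : 1 ≤ n) :
    ∃ x : ℝ, (n : ℝ) ≤ x ∧ recSol 0 1 x (n + 1) = 0 := by
  have hc : ContinuousOn (fun x => recSol 0 1 x (n + 1)) (Set.Icc (n : ℝ) (n + 2)) :=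
    (continuous_recSol 0 continuous_const (n + 1)).continuousOn
  obtain ⟨m, rfl⟩ := Nat.exists_eq_add_of_le' hn
  -- at `x = n` the last step of the recurrence has coefficient `0`
  have h0 : recSol 0 1 ((m + 1 : ℕ) : ℝ) (m + 1 + 1) ≤ 0 := by
    rw [recSol_add_two]
    rcases Nat.eq_zero_or_pos m with rfl | hm
    · simp [recSol]
    · have := recSol_nonneg (n := m + 1) (by omega) le_rfl le_rfl zero_le_one m (by omega)
      push_cast at this ⊢
      linarith
  have h1 : 0 ≤ recSol 0 1 (((m + 1 : ℕ) : ℝ) + 2) (m + 1 + 1) :=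
    recSol_nonneg (n := m + 3) (by omega) (by push_cast; linarith) le_rfl zero_le_one _ (by omega)
  obtain ⟨x, hx, hx0⟩ := intermediate_value_Icc (by linarith) hc ⟨h0, h1⟩
  exact ⟨x, hx.1, hx0⟩

lemma exists_close_roots (n : ℕ) (hn : 1 ≤ n) :
    ∃ x y : ℝ, recSol 0 1 x (n + 1) = 0 ∧ recSol 1 (y / 2) y (n + 1) = 0 ∧ 0 < y ∧ x < y ∧
      y - x ≤ 8 / 2 ^ n := by
  obtain rfl | hn2 : n = 1 ∨ 2 ≤ n := by omega
  · exact ⟨1, 2, by norm_num [recSol], by norm_num [recSol], by norm_num, by norm_num, by norm_num⟩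
  obtain ⟨x, hnx, hx⟩ := exists_odd_root n hn
  have hn2' : (2 : ℝ) ≤ n := by exact_mod_cast hn2
  have he : (0 : ℝ) < 8 / 2 ^ n := by positivity
  have hqn : 0 ≤ recSol 0 1 x n := recSol_nonneg hn2 hnx le_rfl zero_le_one n le_rfl
  have hW := casoratian 0 1 1 (x / 2) x x n
  rw [hx] at hW
  have hqpos : 0 < recSol 0 1 x n := by
    refine lt_of_le_of_ne hqn fun h => ?_
    rw [← h] at hW
    norm_num at hW
  have hr0 : recSol 1 (x / 2) x (n + 1) ≤ 0 := by
    by_contra! h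
    nlinarith [mul_pos hqpos h]
  have hr0' : recSol 1 (x / 2) x (n + 1) ≠ 0 := fun h => by
    rw [h] at hW
    norm_num at hW
  obtain ⟨z, rfl⟩ : ∃ z, z = x + 8 / 2 ^ n := ⟨_, rfl⟩
  have hnz : (n : ℝ) ≤ x + 8 / 2 ^ n := by linarith
  have hbz : 1 ≤ (x + 8 / 2 ^ n) / 2 := by linarith
  have hr1 : 0 ≤ recSol 1 ((x + 8 / 2 ^ n) / 2) (x + 8 / 2 ^ n) (n + 1) := by
    have hW := casoratian 0 1 1 ((x + 8 / 2 ^ n) / 2) x (x + 8 / 2 ^ n) n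
    rw [hx] at hW
    -- a single index where the product of the two solutions is exponentially large
    obtain ⟨k, hk, hk1, hk2⟩ : ∃ k < n, (2 : ℝ) ^ n / 8 ≤ recSol 0 1 x (k + 1) ∧
        1 ≤ recSol 1 ((x + 8 / 2 ^ n) / 2) (x + 8 / 2 ^ n) (k + 1) := by
      obtain rfl | hn3 : n = 2 ∨ 3 ≤ n := by omega
      · refine ⟨0, by norm_num, by norm_num [recSol], by simpa only [recSol] using hbz⟩
      · obtain ⟨m, rfl⟩ := Nat.exists_eq_add_of_le' hn3
        have h1 := recSol_growth hnx le_rfl zero_le_one m le_rfl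
        have h2 := recSol_growth hnz zero_le_one hbz m le_rfl
        refine ⟨m, by omega, ?_, ?_⟩
        · rw [pow_add]
          linarith
        · exact (one_le_mul_of_one_le_of_one_le (one_le_pow₀ one_le_two) hbz).trans h2
    have hs := Finset.single_le_sum
      (f := fun j => recSol 0 1 x (j + 1) *
        recSol 1 ((x + 8 / 2 ^ n) / 2) (x + 8 / 2 ^ n) (j + 1))
      (fun j hj => mul_nonneg
        (recSol_nonneg hn2 hnx le_rfl zero_le_one (j + 1) (Finset.mem_range.1 hj))
        (recSol_nonneg hn2 hnz zero_le_one hbz (j + 1) (Finset.mem_range.1 hj)))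
      (Finset.mem_range.2 hk)
    have h3 : (2 : ℝ) ^ n / 8 ≤ _ :=
      (hk1.trans (le_mul_of_one_le_right ((by positivity : (0 : ℝ) ≤ 2 ^ n / 8).trans hk1)
        hk2)).trans hs
    have h4 := mul_le_mul_of_nonneg_left h3 he.le
    have h5 : (8 : ℝ) / 2 ^ n * (2 ^ n / 8) = 1 := by field_simp
    rw [h5] at h4
    rw [add_sub_cancel_left] at hW
    by_contra! h
    nlinarith [mul_neg_of_pos_of_neg hqpos h]
  obtain ⟨y, hy, hy0⟩ := intermediate_value_Icc (by linarith)
    (continuous_recSol 1 (b := fun y => y / 2) (by fun_prop) (n + 1)).continuousOn ⟨hr0, hr1⟩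
  have hxy : x < y := lt_of_le_of_ne hy.1 fun h => hr0' (by rw [h]; exact hy0)
  exact ⟨x, y, hx, hy0, by linarith, hxy, by linarith [hy.2]⟩

/-- The extension of `recSol` to `ℤ`, even for `s = 1` and odd for `s = -1`. -/
noncomputable def twoSided (s a b x : ℝ) (k : ℤ) : ℝ :=
  (if k < 0 then s else 1) * recSol a b x k.natAbs

/-- The two-sided sequence satisfies the recurrence at every integer; the hypothesis `h0` is the
recurrence at the centre, and `hs` makes the two halves agree there. -/
lemma twoSided_rec {s a b x : ℝ} (hs : s * a = a) (h0 : b + s * b = x * a) (k : ℤ) :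
    |(k : ℝ)| * twoSided s a b x k + twoSided s a b x (k + 1) + twoSided s a b x (k - 1)
      = x * twoSided s a b x k := by
  have hpos : ∀ m : ℕ, twoSided s a b x m = recSol a b x m := fun m => by simp [twoSided]
  have hneg : ∀ m : ℕ, twoSided s a b x (-(m : ℤ)) = s * recSol a b x m := fun m => by
    rcases Nat.eq_zero_or_pos m with rfl | hm
    · simp [twoSided, recSol, hs]
    · simp [twoSided, hm]
  obtain ⟨m, rfl | rfl⟩ := k.eq_nat_or_neg
  · rcases m with _ | m
    · have h1 := hpos 0
      have h2 := hpos 1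
      have h3 := hneg 1
      norm_num [recSol] at h1 h2 h3 ⊢
      rw [h1, h2, h3]
      exact h0
    · have h1 := hpos m
      have h2 := hpos (m + 1)
      have h3 := hpos (m + 2)
      rw [recSol_add_two] at h3
      rw [show ((m + 1 : ℕ) : ℤ) + 1 = ((m + 2 : ℕ) : ℤ) by push_cast; ring,
        show ((m + 1 : ℕ) : ℤ) - 1 = (m : ℤ) by push_cast; ring, h1, h2, h3, Int.cast_natCast,
        Nat.abs_cast]
      push_cast
      ring
  · rcases m with _ | m
    · have h1 := hpos 0
      have h2 := hpos 1
      have h3 := hneg 1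
      norm_num [recSol] at h1 h2 h3 ⊢
      rw [h1, h2, h3]
      exact h0
    · have h1 := hneg m
      have h2 := hneg (m + 1)
      have h3 := hneg (m + 2)
      rw [recSol_add_two] at h3
      rw [show -((m + 1 : ℕ) : ℤ) - 1 = -((m + 2 : ℕ) : ℤ) by push_cast; ring,
        show -((m + 1 : ℕ) : ℤ) + 1 = -(m : ℤ) by push_cast; ring, h1, h2, h3, Int.cast_neg,
        abs_neg, Int.cast_natCast, Nat.abs_cast]
      push_cast
      ring

/-- A two-sided solution vanishing at distance `n + 1` from the centre restricts to an eigenvector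
of `T_n`. -/
lemma mem_spectrum_of_recSol {n : ℕ} (hn : 1 ≤ n) {T : Matrix (Fin (2 * n + 1)) (Fin (2 * n + 1)) ℝ}
    (hT : ∀ i j, T i j =
      if i = j then |(n : ℝ) - (i : ℕ)|
      else if (j : ℕ) = (i : ℕ) + 1 ∨ (i : ℕ) = (j : ℕ) + 1 then 1 else 0)
    {s a b x : ℝ} (hs : s * a = a) (h0 : b + s * b = x * a) (hb : b ≠ 0)
    (hx : recSol a b x (n + 1) = 0) :
    (x : ℂ) ∈ spectrum ℂ (T.map (Complex.ofReal : ℝ → ℂ)) := by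
  have hend : ∀ k : ℤ, k.natAbs = n + 1 → twoSided s a b x k = 0 := fun k hk => by
    simp [twoSided, hk, hx]
  set v : Fin (2 * n + 1) → ℝ := fun i => twoSided s a b x ((i : ℕ) - (n : ℤ)) with hv
  have hTv : T.mulVec v = x • v := by
    ext i
    have hi := i.isLt
    -- the row of `T` is split into its diagonal, upper and lower parts
    obtain ⟨g, hg⟩ : ∃ g : ℕ → ℝ, g = fun j =>
        (if (i : ℕ) = j then |(n : ℝ) - (i : ℕ)| * twoSided s a b x ((j : ℤ) - n) else 0)
          + (if (i : ℕ) + 1 = j then twoSided s a b x ((j : ℤ) - n) else 0)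
          + (if (i : ℕ) = j + 1 then twoSided s a b x ((j : ℤ) - n) else 0) := ⟨_, rfl⟩
    have hsplit : ∀ j, T i j * v j = g j := fun j => by
      rw [hT]
      simp only [hv, hg, Fin.ext_iff]
      split_ifs <;> first | omega | simp
    have hlow : ∑ j ∈ Finset.range (2 * n + 1),
        (if (i : ℕ) = j + 1 then twoSided s a b x ((j : ℤ) - n) else 0)
          = twoSided s a b x ((i : ℕ) - (n : ℤ) - 1) := by
      rcases hi0 : (i : ℕ) with _ | m
      · rw [hend _ (by omega)]
        simp
      · simp only [Nat.add_right_cancel_iff]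
        rw [Finset.sum_ite_eq, if_pos (Finset.mem_range.2 (by omega))]
        congr 1
        push_cast
        ring
    have hup : ∑ j ∈ Finset.range (2 * n + 1),
        (if (i : ℕ) + 1 = j then twoSided s a b x ((j : ℤ) - n) else 0)
          = twoSided s a b x ((i : ℕ) - (n : ℤ) + 1) := by
      rw [Finset.sum_ite_eq]
      split_ifs with h
      · congr 1
        push_cast
        ring
      · rw [Finset.mem_range] at h
        exact (hend _ (by omega)).symm
    rw [Matrix.mulVec, dotProduct,
      (Finset.sum_congr rfl fun j _ => hsplit j).trans (Fin.sum_univ_eq_sum_range g _), hg,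
      Finset.sum_add_distrib, Finset.sum_add_distrib, hlow, hup,
      Finset.sum_ite_eq, if_pos (Finset.mem_range.2 hi), abs_sub_comm]
    have := twoSided_rec hs h0 ((i : ℕ) - (n : ℤ))
    push_cast at this
    simpa [hv] using this
  have hv0 : v ≠ 0 := fun h => by
    have h1 := congrFun h ⟨n + 1, by omega⟩
    simp [hv, twoSided, recSol, hb] at h1
  rw [← Matrix.spectrum_toLin']
  refine Module.End.HasEigenvalue.mem_spectrum
    (Module.End.hasEigenvalue_of_hasEigenvector (x := fun i => (v i : ℂ))
      (Module.End.hasEigenvector_iff.2 ⟨Module.End.mem_eigenspace_iff.2 ?_, fun h => hv0 ?_⟩))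
  · ext i
    have h1 := congrArg (Complex.ofReal) (congrFun hTv i)
    simpa [Matrix.mulVec, dotProduct] using h1
  · ext i
    exact Complex.ofReal_eq_zero.1 (congrFun h i)

/-- The Wilkinson-type matrix `T_n` (symmetric tridiagonal of size `(2n+1) × (2n+1)` with
diagonal `|n+1-k|` and unit off-diagonals) has exponentially small eigenvalue gaps:
`mindgap(T_n) ≤ C · 2^{-c n}` for some constants `C ≥ 1`, `c > 0`. -/
theorem wilkinson_matrix_small_eigenvalue_gap :
    ∃ (C c : ℝ), 1 ≤ C ∧ 0 < c ∧
      ∀ (n : ℕ), 1 ≤ n → ∀ T : Matrix (Fin (2 * n + 1)) (Fin (2 * n + 1)) ℝ,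
        (∀ i j, T i j =
          if i = j then |(n : ℝ) - (i : ℕ)|
          else if (j : ℕ) = (i : ℕ) + 1 ∨ (i : ℕ) = (j : ℕ) + 1 then 1 else 0) →
        ∃ lam mu : ℂ, lam ∈ spectrum ℂ (T.map (Complex.ofReal : ℝ → ℂ)) ∧
          mu ∈ spectrum ℂ (T.map (Complex.ofReal : ℝ → ℂ)) ∧ lam ≠ mu ∧
          ‖lam - mu‖ ≤ C * (2 : ℝ) ^ (-(c * n)) := by
  refine ⟨8, 1, by norm_num, one_pos, fun n hn T hT => ?_⟩
  obtain ⟨x, y, hx, hy, hy0, hxy, hle⟩ := exists_close_roots n hn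
  refine ⟨x, y, mem_spectrum_of_recSol (s := -1) hn hT (by simp) (by simp) one_ne_zero hx,
    mem_spectrum_of_recSol (s := 1) hn hT (by simp) (by ring) (by positivity) hy,
    fun h => hxy.ne (by exact_mod_cast h), ?_⟩
  rw [← Complex.ofReal_sub, Complex.norm_real, Real.norm_eq_abs, abs_sub_comm,
    abs_of_pos (sub_pos.2 hxy), one_mul, Real.rpow_neg two_pos.le, Real.rpow_natCast]
  exact hle
end
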